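/- arXiv:math/0607436 — 6 statements merged into one kernel-verified Lean document; each statement's English description precedes it below -/
import Mathlib

section
/- Let (M, m) be a measure space, let f : M → M be a measurable map such that m(f⁻¹(N)) = 0 for every measurable set N with m(N) = 0, and let T assign to each x ∈ M a set T(x) of positive integers, with the concatenation property: if n ∈ T(x) and k ∈ T(f^n(x)) then n + k ∈ T(x), and such that for every n the set {x : n ∈ T(x)} is measurable. If T(x) is nonempty for m-almost every x, then T(x) is infinite for m-almost every x. -/
open MeasureTheory

open Filter

theorem tendsto_ae_of_forall_measurableSet_preimage_null {α β : Type*} [MeasurableSpace α]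
    [MeasurableSpace β] {μ : Measure α} {ν : Measure β} {f : α → β}
    (hf : ∀ N : Set β, MeasurableSet N → ν N = 0 → μ (f ⁻¹' N) = 0) :
    Tendsto f (ae μ) (ae ν) := by
  intro s hs
  have hnull : ν (toMeasurable ν sᶜ) = 0 := by rwa [measure_toMeasurable, ← mem_ae_iff]
  have hsub : (f ⁻¹' s)ᶜ ⊆ f ⁻¹' toMeasurable ν sᶜ :=
    Set.preimage_mono (subset_toMeasurable ν sᶜ)
  exact measure_mono_null hsub (hf _ (measurableSet_toMeasurable ν sᶜ) hnull)

theorem eventually_forall_iterate {α : Type*} {l : Filter α} [CountableInterFilter l] {f : α → α}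
    {p : α → Prop} (hf : Tendsto f l l) (hp : ∀ᶠ x in l, p x) :
    ∀ᶠ x in l, ∀ n : ℕ, p (f^[n] x) :=
  eventually_countable_forall.2 fun n => (hf.iterate n).eventually hp

/-- The concatenation property of hyperbolic times, for an arbitrary assignment `T` of positive
times to the points of a dynamical system `f`: a time `n` of `x` followed by a time `k` of `f^n(x)`
gives the time `n + k` of `x`. -/
def ConcatenationProperty {X : Type*} (f : X → X) (T : X → Set ℕ+) : Prop :=
  ∀ (x : X) (n k : ℕ+), n ∈ T x → k ∈ T (f^[(n : ℕ)] x) → n + k ∈ T x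

namespace ConcatenationProperty

variable {X : Type*} {f : X → X} {T : X → Set ℕ+} {x : X}

theorem exists_gt (hT : ConcatenationProperty f T) {n : ℕ+} (hn : n ∈ T x)
    (hne : (T (f^[(n : ℕ)] x)).Nonempty) : ∃ m ∈ T x, n < m :=
  let ⟨k, hk⟩ := hne
  ⟨n + k, hT x n k hn hk, PNat.lt_add_right n k⟩

theorem infinite_of_forall_iterate_nonempty (hT : ConcatenationProperty f T)
    (hne : ∀ n : ℕ, (T (f^[n] x)).Nonempty) : (T x).Infinite := by
  intro hfin
  obtain ⟨n, hn⟩ := hfin.exists_maximal (hne 0)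
  obtain ⟨m, hm, hnm⟩ := hT.exists_gt hn.prop (hne n)
  exact hn.not_gt hm hnm

end ConcatenationProperty

theorem ae_infinite_of_ae_nonempty_concatenation_general {X : Type*} {l : Filter X}
    [CountableInterFilter l] {f : X → X} {T : X → Set ℕ+} (hf : Tendsto f l l)
    (hT : ConcatenationProperty f T) (hne : ∀ᶠ x in l, (T x).Nonempty) :
    ∀ᶠ x in l, (T x).Infinite :=
  (eventually_forall_iterate hf hne).mono fun _ => hT.infinite_of_forall_iterate_nonempty

/-- Let `(M, m)` be a measure space, `f : M → M` a measurable map whose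
preimages preserve null sets, and let `T` assign to each `x ∈ M` a set `T(x)` of positive
integers with the concatenation property (`n ∈ T(x)` and `k ∈ T(f^n(x))` imply
`n + k ∈ T(x)`) and such that `{x : n ∈ T(x)}` is measurable for every `n`. If `T(x)` is
nonempty for `m`-a.e. `x`, then `T(x)` is infinite for `m`-a.e. `x`. -/
theorem ae_infinite_of_ae_nonempty_concatenation
    {M : Type*} [MeasurableSpace M] (m : Measure M)
    (f : M → M) (hf : Measurable f)
    (hnull : ∀ N : Set M, MeasurableSet N → m N = 0 → m (f ⁻¹' N) = 0)
    (T : M → Set ℕ+)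
    (hconc : ∀ (x : M) (n k : ℕ+), n ∈ T x → k ∈ T (f^[(n : ℕ)] x) → n + k ∈ T x)
    (hmeas : ∀ n : ℕ+, MeasurableSet {x : M | n ∈ T x})
    (hne : ∀ᵐ x ∂m, (T x).Nonempty) :
    ∀ᵐ x ∂m, (T x).Infinite :=
  ae_infinite_of_ae_nonempty_concatenation_general
    (tendsto_ae_of_forall_measurableSet_preimage_null hnull) hconc hne
end

section
/- Let f̂ : [−1,1] → [−1,1] be defined by f̂(x) = 2√x − 1 for x ∈ [0,1] and f̂(x) = 1 − 2√(−x) for x ∈ [−1,0). Then f̂ preserves Lebesgue measure on [−1,1]: the pushforward under f̂ of Lebesgue measure restricted to [−1,1] equals Lebesgue measure restricted to [−1,1]. -/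
open MeasureTheory

/-- The "intermittent" circle map on `[-1,1]`: `f̂(x) = 2√x - 1` for `x ≥ 0` and
`f̂(x) = 1 - 2√(-x)` for `x < 0`. -/
noncomputable def fhat : ℝ → ℝ := fun x =>
  if 0 ≤ x then 2 * Real.sqrt x - 1 else 1 - 2 * Real.sqrt (-x)

/-!
The map is handled through its transfer operator. Up to a null set, its domain is the half-open
interval `[-1, 1)`, on which `f̂` has two full branches with inverses `x ↦ ((1 + x) / 2) ^ 2`, onto
`[0, 1)`, and `x ↦ -((1 - x) / 2) ^ 2`, onto `[-1, 0)`. By the change of variables formula, `f̂`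
pushes Lebesgue measure on each branch to the measure whose density is the derivative of the inverse
branch. The two densities are `(1 + x) / 2` and `(1 - x) / 2`, and they add up to `1`.
-/

open Set Function
open scoped ENNReal

section TransferOperator

theorem withDensity_tsum_of_aemeasurable {α ι : Type*} [MeasurableSpace α] [Countable ι]
    {μ : Measure α} {ρ : ι → α → ℝ≥0∞} (hρ : ∀ i, AEMeasurable (ρ i) μ) :
    μ.withDensity (fun x ↦ ∑' i, ρ i x) = Measure.sum fun i ↦ μ.withDensity (ρ i) := by
  ext u hu
  simp_rw [Measure.sum_apply _ hu, withDensity_apply _ hu]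
  exact lintegral_tsum fun i ↦ (hρ i).restrict

variable {E ι : Type*} [NormedAddCommGroup E] [NormedSpace ℝ E] [FiniteDimensional ℝ E]
  [MeasurableSpace E] [BorelSpace E] {μ : Measure E} [μ.IsAddHaarMeasure]
  {f : E → E} {t : Set E}

theorem map_restrict_image_eq_withDensity {g : E → E} {g' : E → E →L[ℝ] E}
    (hf : Measurable f) (ht : MeasurableSet t)
    (hg : ∀ x ∈ t, HasFDerivWithinAt g (g' x) t x) (hfg : LeftInvOn f g t) :
    (μ.restrict (g '' t)).map f =
      (μ.restrict t).withDensity fun x ↦ ENNReal.ofReal |(g' x).det| := by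
  set ν := (μ.restrict t).withDensity fun x ↦ ENNReal.ofReal |(g' x).det|
  have hν : ν ≪ μ.restrict t := withDensity_absolutelyContinuous _ _
  have hgm : AEMeasurable g ν :=
    (ContinuousOn.aemeasurable (fun x hx ↦ (hg x hx).continuousWithinAt) ht).mono_ac hν
  have hfg_ae : f ∘ g =ᵐ[ν] id := hν.ae_le ((ae_restrict_mem ht).mono fun _ hx ↦ hfg hx)
  calc (μ.restrict (g '' t)).map f = (ν.map g).map f := by
        rw [map_withDensity_abs_det_fderiv_eq_addHaar μ ht.nullMeasurableSet hg hfg.injOn]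
    _ = ν.map (f ∘ g) := AEMeasurable.map_map_of_aemeasurable hf.aemeasurable hgm
    _ = ν := by rw [Measure.map_congr hfg_ae, Measure.map_id]

theorem map_restrict_iUnion_image_eq_withDensity [Countable ι] {g : ι → E → E}
    {g' : ι → E → E →L[ℝ] E} (hf : Measurable f) (ht : MeasurableSet t)
    (hg : ∀ i, ∀ x ∈ t, HasFDerivWithinAt (g i) (g' i x) t x)
    (hfg : ∀ i, LeftInvOn f (g i) t) (hd : Pairwise (AEDisjoint μ on fun i ↦ g i '' t)) :
    (μ.restrict (⋃ i, g i '' t)).map f =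
      (μ.restrict t).withDensity fun x ↦ ∑' i, ENNReal.ofReal |(g' i x).det| := by
  have him (i : ι) : NullMeasurableSet (g i '' t) μ :=
    (measurable_image_of_fderivWithin ht (hg i) (hfg i).injOn).nullMeasurableSet
  rw [Measure.restrict_iUnion_ae hd him, Measure.map_sum hf.aemeasurable,
    withDensity_tsum_of_aemeasurable fun i ↦ aemeasurable_ofReal_abs_det_fderivWithin μ ht (hg i)]
  exact congrArg Measure.sum
    (funext fun i ↦ map_restrict_image_eq_withDensity hf ht (hg i) (hfg i))

theorem map_restrict_iUnion_image_eq_restrict [Countable ι] {g : ι → E → E}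
    {g' : ι → E → E →L[ℝ] E} (hf : Measurable f) (ht : MeasurableSet t)
    (hg : ∀ i, ∀ x ∈ t, HasFDerivWithinAt (g i) (g' i x) t x)
    (hfg : ∀ i, LeftInvOn f (g i) t) (hd : Pairwise (AEDisjoint μ on fun i ↦ g i '' t))
    (hsum : ∀ x ∈ t, ∑' i, ENNReal.ofReal |(g' i x).det| = 1) :
    (μ.restrict (⋃ i, g i '' t)).map f = μ.restrict t := by
  rw [map_restrict_iUnion_image_eq_withDensity hf ht hg hfg hd,
    withDensity_congr_ae ((ae_restrict_mem ht).mono hsum)]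
  exact withDensity_one

end TransferOperator

theorem measurable_fhat : Measurable fhat :=
  Measurable.ite measurableSet_Ici (by fun_prop) (by fun_prop)

theorem fhat_sq {y : ℝ} (hy : 0 ≤ y) : fhat (y ^ 2) = 2 * y - 1 := by
  rw [fhat, if_pos (sq_nonneg y), Real.sqrt_sq hy]

theorem fhat_neg_sq {y : ℝ} (hy : 0 < y) : fhat (-y ^ 2) = 1 - 2 * y := by
  rw [fhat, if_neg (neg_lt_zero.mpr (pow_pos hy 2)).not_ge, neg_neg, Real.sqrt_sq hy.le]

/-- The inverse branches of `f̂` on `[-1, 1)`: `g₁`, indexed by `true`, takes values in `[0, 1)` and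
`g₂`, indexed by `false`, in `[-1, 0)`. -/
noncomputable def fhatInv : Bool → ℝ → ℝ
  | true, x => ((1 + x) / 2) ^ 2
  | false, x => -((1 - x) / 2) ^ 2

/-- The derivatives of the inverse branches `fhatInv` of `f̂`. -/
noncomputable def fhatInvDeriv : Bool → ℝ → ℝ
  | true, x => (1 + x) / 2
  | false, x => (1 - x) / 2

theorem hasDerivAt_fhatInv (b : Bool) (x : ℝ) :
    HasDerivAt (fhatInv b) (fhatInvDeriv b x) x := by
  cases b with
  | true =>
    exact ((((hasDerivAt_id' x).const_add 1).div_const 2).pow 2).congr_deriv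
      (by rw [fhatInvDeriv]; ring)
  | false =>
    exact ((((hasDerivAt_id' x).const_sub 1).div_const 2).pow 2).neg.congr_deriv
      (by rw [fhatInvDeriv]; ring)

theorem leftInvOn_fhat_fhatInv (b : Bool) : LeftInvOn fhat (fhatInv b) (Ico (-1) 1) := by
  rintro x ⟨hx₁, hx₂⟩
  cases b with
  | true => rw [fhatInv, fhat_sq (by linarith)]; ring
  | false => rw [fhatInv, fhat_neg_sq (by linarith)]; ring

theorem image_fhatInv_true : fhatInv true '' Ico (-1) 1 = Ico 0 1 := by
  apply Subset.antisymm
  · rintro _ ⟨x, ⟨hx₁, hx₂⟩, rfl⟩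
    exact ⟨sq_nonneg _, pow_lt_one₀ (by linarith) (by linarith) two_ne_zero⟩
  · rintro y ⟨hy₁, hy₂⟩
    have hsqrt : √y < 1 := (Real.sqrt_lt_sqrt hy₁ hy₂).trans_eq Real.sqrt_one
    refine ⟨2 * √y - 1, ⟨by linarith [Real.sqrt_nonneg y], by linarith⟩, ?_⟩
    rw [fhatInv, add_sub_cancel, mul_div_cancel_left₀ _ two_ne_zero, Real.sq_sqrt hy₁]

theorem image_fhatInv_false : fhatInv false '' Ico (-1) 1 = Ico (-1) 0 := by
  apply Subset.antisymm
  · rintro _ ⟨x, ⟨hx₁, hx₂⟩, rfl⟩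
    exact ⟨neg_le_neg (pow_le_one₀ (by linarith) (by linarith)),
      neg_lt_zero.mpr (pow_pos (by linarith) 2)⟩
  · rintro y ⟨hy₁, hy₂⟩
    have hsqrt : √(-y) ≤ 1 := Real.sqrt_le_one.mpr (by linarith)
    have hsqrt_pos : 0 < √(-y) := Real.sqrt_pos.mpr (by linarith)
    refine ⟨1 - 2 * √(-y), ⟨by linarith, by linarith⟩, ?_⟩
    rw [fhatInv, sub_sub_cancel, mul_div_cancel_left₀ _ two_ne_zero, Real.sq_sqrt (by linarith),
      neg_neg]

theorem iUnion_image_fhatInv : ⋃ b, fhatInv b '' Ico (-1) 1 = Ico (-1) 1 := by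
  calc ⋃ b, fhatInv b '' Ico (-1) 1
      = fhatInv true '' Ico (-1) 1 ∪ fhatInv false '' Ico (-1) 1 := iSup_bool_eq
    _ = Ico (-1) 0 ∪ Ico 0 1 := by rw [image_fhatInv_true, image_fhatInv_false, union_comm]
    _ = Ico (-1) 1 := Ico_union_Ico_eq_Ico (by norm_num) zero_le_one

theorem pairwise_disjoint_image_fhatInv :
    Pairwise (Disjoint on fun b ↦ fhatInv b '' Ico (-1) 1) := by
  have hd : Disjoint (Ico (-1 : ℝ) 0) (Ico 0 1) := Ico_disjoint_Ico_same
  rintro (_ | _) (_ | _) hne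
  · exact absurd rfl hne
  · simpa only [onFun, image_fhatInv_true, image_fhatInv_false] using hd
  · simpa only [onFun, image_fhatInv_true, image_fhatInv_false] using hd.symm
  · exact absurd rfl hne

theorem tsum_abs_fhatInvDeriv {x : ℝ} (hx : x ∈ Ico (-1) 1) :
    ∑' b, ENNReal.ofReal |fhatInvDeriv b x| = 1 := by
  have h₁ : 0 ≤ (1 + x) / 2 := by linarith [hx.1]
  have h₂ : 0 ≤ (1 - x) / 2 := by linarith [hx.2]
  rw [tsum_bool, fhatInvDeriv, fhatInvDeriv, abs_of_nonneg h₁, abs_of_nonneg h₂,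
    ← ENNReal.ofReal_add h₂ h₁, ← ENNReal.ofReal_one]
  congr 1
  ring

/-- The map `f̂` preserves Lebesgue measure on `[-1,1]`: the pushforward
under `f̂` of Lebesgue measure restricted to `[-1,1]` equals Lebesgue measure restricted to
`[-1,1]`. -/
theorem fhat_measurePreserving :
    Measure.map fhat (volume.restrict (Set.Icc (-1 : ℝ) 1)) =
      volume.restrict (Set.Icc (-1 : ℝ) 1) := by
  have hderiv (b : Bool) (x : ℝ) (_ : x ∈ Ico (-1 : ℝ) 1) :=
    (hasDerivAt_fhatInv b x).hasFDerivAt.hasFDerivWithinAt (s := Ico (-1) 1)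
  have hIco := map_restrict_iUnion_image_eq_restrict (μ := volume) measurable_fhat
    measurableSet_Ico hderiv leftInvOn_fhat_fhatInv pairwise_disjoint_image_fhatInv.aedisjoint
    (fun x hx ↦ by simpa only [ContinuousLinearMap.det_toSpanSingleton] using
      tsum_abs_fhatInvDeriv hx)
  rwa [iUnion_image_fhatInv, restrict_Ico_eq_restrict_Icc] at hIco
end

section
/- Let f̂ : ℝ → ℝ be the 2-periodic extension of the map given on [−1,1) by f̂(x) = 2√x − 1 for x ∈ [0,1) and f̂(x) = 1 − 2√(−x) for x ∈ [−1,0), and let f be the induced continuous map of the circle ℝ/2ℤ (well-defined since f̂(−1) ≡ f̂(1) mod 2). Then f is topologically mixing in the following sense: for every nonempty open subset U of ℝ/2ℤ there exists N ≥ 1 such that the image of U under the N-th iterate of f is the whole circle, f^N(U) = ℝ/2ℤ. -/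
/-!
The map `f` lifts to a map `x ↦ x + H x` of the line, where the displacement `H` is continuous,
commutes with the translation by `2` and is strictly increasing: on `[-1, 1]` it equals
`2 s - 1 - s |s|` with `s` the signed square root of `x`. Applying the lift to `[x, y]` therefore
adds `H y - H x` to its length. By compactness this gain is bounded below by some `g > 0` as soon
as `y - x` is bounded below, so after `n` steps the length has grown by at least `n g`. Eventually
it exceeds the length of the circle. Compactness stands in for uniform expansion, which fails
because the lift has derivative `1` at the fixed point `1`.
-/

open Set Function
open scoped AddConstMap

section StrictMonoDisplacement

variable {p q : ℝ}

theorem exists_pos_le_sub_of_strictMono {H : ℝ →+c[p, q] ℝ} (hp : p ≠ 0) (hcont : Continuous H)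
    (hmono : StrictMono H) {l : ℝ} (hl : 0 < l) :
    ∃ g > 0, ∀ x y, l ≤ y - x → g ≤ H y - H x := by
  have hper : Periodic (fun x => H (x + l) - H x) p := fun x => by
    simp only [add_right_comm x p l, AddConstMapClass.map_add_const, add_sub_add_right_eq_sub]
  obtain ⟨_, ⟨x₀, rfl⟩, hmin⟩ :=
    (hper.compact_of_continuous hp (by fun_prop)).exists_isLeast (range_nonempty _)
  refine ⟨H (x₀ + l) - H x₀, sub_pos.2 (hmono (lt_add_of_pos_right x₀ hl)), fun x y hxy => ?_⟩
  calc H (x₀ + l) - H x₀ ≤ H (x + l) - H x := hmin (mem_range_self x)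
    _ ≤ H y - H x := sub_le_sub_right (hmono.monotone (by linarith)) _

theorem add_nsmul_le_iterate_sub_iterate {G : Type*} [AddCommGroup G] [PartialOrder G]
    [IsOrderedAddMonoid G] {F : G → G} {l g : G} (hg : 0 ≤ g)
    (hF : ∀ x y, l ≤ y - x → y - x + g ≤ F y - F x) {x y : G} (hxy : l ≤ y - x) (n : ℕ) :
    y - x + n • g ≤ F^[n] y - F^[n] x := by
  induction n with
  | zero => simp
  | succ n ih =>
    have hlong : l ≤ F^[n] y - F^[n] x :=
      hxy.trans (le_of_add_le_of_nonneg_left ih (nsmul_nonneg hg n))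
    rw [iterate_succ_apply', iterate_succ_apply', succ_nsmul, ← add_assoc]
    exact (add_le_add_left ih g).trans (hF _ _ hlong)

theorem coe_image_Ioo_eq_univ {𝕜 : Type*} [AddCommGroup 𝕜] [LinearOrder 𝕜] [IsOrderedAddMonoid 𝕜]
    [Archimedean 𝕜] {p : 𝕜} [Fact (0 < p)] {a b : 𝕜} (h : p < b - a) :
    ((↑) : 𝕜 → AddCircle p) '' Ioo a b = univ :=
  univ_subset_iff.1 <| (AddCircle.coe_image_Ioc_eq p a).symm.trans_subset <|
    image_mono (Ioc_subset_Ioo_right (lt_sub_iff_add_lt'.1 h))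

theorem iterate_image_eq_univ_of_lift [Fact (0 < p)] {f : AddCircle p → AddCircle p} {F : ℝ → ℝ}
    (hcont : Continuous F) (hF : Semiconj ((↑) : ℝ → AddCircle p) F f) {U : Set (AddCircle p)}
    {a b : ℝ} (hab : a ≤ b) (hU : Ioo a b ⊆ (↑) ⁻¹' U) {n : ℕ}
    (hlong : p < F^[n] b - F^[n] a) : f^[n] '' U = univ := by
  rw [← univ_subset_iff]
  calc univ = ((↑) : ℝ → AddCircle p) '' Ioo (F^[n] a) (F^[n] b) :=
        (coe_image_Ioo_eq_univ hlong).symm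
    _ ⊆ (↑) '' (F^[n] '' Ioo a b) :=
        image_mono (intermediate_value_Ioo hab (hcont.iterate n).continuousOn)
    _ = f^[n] '' ((↑) '' Ioo a b) := (hF.iterate_right n).set_image _
    _ ⊆ f^[n] '' U := image_mono (image_subset_iff.2 hU)

theorem exists_iterate_image_eq_univ_of_strictMono_displacement [hp : Fact (0 < p)]
    {f : AddCircle p → AddCircle p} {H : ℝ →+c[p, q] ℝ} (hcont : Continuous H)
    (hmono : StrictMono H) (hf : Semiconj ((↑) : ℝ → AddCircle p) (fun x => x + H x) f)
    {U : Set (AddCircle p)} (hU : IsOpen U) (hne : U.Nonempty) :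
    ∃ n : ℕ, 1 ≤ n ∧ f^[n] '' U = univ := by
  obtain ⟨a, b, hab, hsub⟩ := (hU.preimage (AddCircle.continuous_mk' p)).exists_Ioo_subset
    (hne.preimage QuotientAddGroup.mk_surjective)
  obtain ⟨g, hg, hgain⟩ := exists_pos_le_sub_of_strictMono hp.out.ne' hcont hmono (sub_pos.2 hab)
  obtain ⟨n, hn⟩ := exists_lt_nsmul hg p
  have hn₀ : n ≠ 0 := by
    rintro rfl
    exact hp.out.not_gt (by simpa using hn)
  have hgrow : b - a + n • g ≤ (fun x => x + H x)^[n] b - (fun x => x + H x)^[n] a :=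
    add_nsmul_le_iterate_sub_iterate hg.le (fun x y hxy => by linarith [hgain x y hxy]) le_rfl n
  exact ⟨n, Nat.one_le_iff_ne_zero.2 hn₀, iterate_image_eq_univ_of_lift (by fun_prop) hf hab.le
    hsub (by linarith)⟩

end StrictMonoDisplacement

section SignedSqrt

/-- The signed square root, `√x` for `0 ≤ x` and `-√(-x)` for `x ≤ 0`. The formula relies on
`Real.sqrt` vanishing on negative numbers. -/
noncomputable def signedSqrt (x : ℝ) : ℝ := √x - √(-x)

theorem signedSqrt_of_nonneg {x : ℝ} (hx : 0 ≤ x) : signedSqrt x = √x := by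
  rw [signedSqrt, Real.sqrt_eq_zero_of_nonpos (neg_nonpos.2 hx), sub_zero]

theorem signedSqrt_neg (x : ℝ) : signedSqrt (-x) = -signedSqrt x := by
  rw [signedSqrt, signedSqrt, neg_neg, neg_sub]

theorem signedSqrt_of_nonpos {x : ℝ} (hx : x ≤ 0) : signedSqrt x = -√(-x) := by
  rw [← signedSqrt_of_nonneg (neg_nonneg.2 hx), signedSqrt_neg, neg_neg]

theorem signedSqrt_one : signedSqrt 1 = 1 := by
  rw [signedSqrt_of_nonneg zero_le_one, Real.sqrt_one]

theorem continuous_signedSqrt : Continuous signedSqrt := by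
  unfold signedSqrt
  fun_prop

theorem strictMonoOn_two_mul_signedSqrt_sub :
    StrictMonoOn (fun x => 2 * signedSqrt x - x) (Icc (-1) 1) := by
  have hpos : StrictMonoOn (fun x => 2 * signedSqrt x - x) (Icc 0 1) := by
    rintro x ⟨hx₀, -⟩ y ⟨hy₀, hy₁⟩ hxy
    have hlt : √x < √y := Real.sqrt_lt_sqrt hx₀ hxy
    have hle : √y ≤ 1 := Real.sqrt_le_one.2 hy₁
    have hincr : 0 < (√y - √x) * (2 - √x - √y) := mul_pos (by linarith) (by linarith)
    simp only [signedSqrt_of_nonneg hx₀, signedSqrt_of_nonneg hy₀]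
    linarith [Real.sq_sqrt hx₀, Real.sq_sqrt hy₀]
  have hneg : StrictMonoOn (fun x => 2 * signedSqrt x - x) (Icc (-1) 0) := by
    rintro x ⟨hx₁, hx₀⟩ y ⟨-, hy₀⟩ hxy
    have h := hpos (a := -y) ⟨by linarith, by linarith⟩ (b := -x) ⟨by linarith, by linarith⟩
      (neg_lt_neg hxy)
    simp only [signedSqrt_neg] at h
    linarith
  rw [← Icc_union_Icc_eq_Icc (b := (0 : ℝ)) (by norm_num) zero_le_one]
  exact hneg.union hpos (isGreatest_Icc (by norm_num)) (isLeast_Icc zero_le_one)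

end SignedSqrt

section SqrtDisplacement

local instance fact_zero_lt_two : Fact ((0 : ℝ) < 2) := ⟨two_pos⟩

/-- The displacement `H` of a lift `x ↦ x + H x` of the circle map: on `[-1, 1]` the lift is
`x ↦ 2 * signedSqrt x - 1`, and the function `x ↦ signedSqrt x - x`, which vanishes at `-1` and at
`1`, is extended periodically. -/
noncomputable def sqrtDisplacement : ℝ →+c[2, 2] ℝ where
  toFun x := x - 1 + 2 * AddCircle.liftIco 2 (-1) (fun y => signedSqrt y - y) x
  map_add_const' x := by
    rw [AddCircle.coe_add_period]
    ring

theorem sqrtDisplacement_of_mem_Icc {x : ℝ} (hx : x ∈ Icc (-1) 1) :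
    sqrtDisplacement x = 2 * signedSqrt x - x - 1 := by
  have of_mem_Ico {y : ℝ} (hy : y ∈ Ico (-1) 1) :
      sqrtDisplacement y = 2 * signedSqrt y - y - 1 := by
    calc sqrtDisplacement y = y - 1 + 2 * AddCircle.liftIco 2 (-1) (fun y => signedSqrt y - y) y :=
          rfl
      _ = y - 1 + 2 * (signedSqrt y - y) := by
        rw [AddCircle.liftIco_coe_apply ⟨hy.1, by linarith [hy.2]⟩]
      _ = 2 * signedSqrt y - y - 1 := by ring
  rcases hx.2.eq_or_lt with rfl | hx₁
  · calc sqrtDisplacement 1 = sqrtDisplacement (-1 + 2) := by norm_num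
      _ = sqrtDisplacement (-1) + 2 := AddConstMapClass.map_add_const _ _
      _ = 2 * signedSqrt 1 - 1 - 1 := by
        rw [of_mem_Ico (by norm_num), signedSqrt_neg, signedSqrt_one]
        norm_num
  · exact of_mem_Ico ⟨hx.1, hx₁⟩

theorem continuous_sqrtDisplacement : Continuous sqrtDisplacement := by
  have hends : signedSqrt (-1) - -1 = signedSqrt (-1 + 2) - (-1 + 2) := by
    norm_num [signedSqrt_neg, signedSqrt_one]
  have hlift : Continuous (AddCircle.liftIco 2 (-1) fun y => signedSqrt y - y) :=
    AddCircle.liftIco_continuous hends (continuous_signedSqrt.sub continuous_id).continuousOn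
  exact (continuous_id.sub continuous_const).add
    (continuous_const.mul (hlift.comp (AddCircle.continuous_mk' 2)))

theorem strictMono_sqrtDisplacement : StrictMono sqrtDisplacement := by
  rw [AddConstMapClass.strictMono_iff_Icc two_pos (-1), show (-1 : ℝ) + 2 = 1 by norm_num]
  intro x hx y hy hxy
  rw [sqrtDisplacement_of_mem_Icc hx, sqrtDisplacement_of_mem_Icc hy]
  exact sub_lt_sub_right (strictMonoOn_two_mul_signedSqrt_sub hx hy hxy) 1

theorem coe_add_sqrtDisplacement_eq {F : ℝ → ℝ}
    (hpos : ∀ x ∈ Ico (0 : ℝ) 1, F x = 2 * √x - 1)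
    (hneg : ∀ x ∈ Ico (-1 : ℝ) 0, F x = 1 - 2 * √(-x)) (hper : Periodic F 2) (x : ℝ) :
    ((x + sqrtDisplacement x : ℝ) : AddCircle (2 : ℝ)) = F x := by
  have hdiff : Periodic (fun x => ((x + sqrtDisplacement x - F x : ℝ) : AddCircle (2 : ℝ))) 2 := by
    intro y
    simp only [AddConstMapClass.map_add_const, hper y]
    rw [show y + 2 + (sqrtDisplacement y + 2) - F y = y + sqrtDisplacement y - F y + 2 + 2 by ring,
      AddCircle.coe_add_period, AddCircle.coe_add_period]
  obtain ⟨y, ⟨hy₁, hy₂⟩, hxy⟩ := hdiff.exists_mem_Ico two_pos x (-1)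
  replace hy₂ : y < 1 := by linarith
  refine sub_eq_zero.1 (hxy.trans ?_)
  rw [sqrtDisplacement_of_mem_Icc ⟨hy₁, hy₂.le⟩]
  rcases le_or_gt 0 y with hy | hy
  · have hval : y + (2 * signedSqrt y - y - 1) - F y = 0 := by
      rw [hpos y ⟨hy, hy₂⟩, signedSqrt_of_nonneg hy]
      ring
    rw [hval, QuotientAddGroup.mk_zero]
  · have hval : y + (2 * signedSqrt y - y - 1) - F y = -2 := by
      rw [hneg y ⟨hy₁, hy⟩, signedSqrt_of_nonpos hy.le]
      ring
    rw [hval, AddCircle.coe_neg, AddCircle.coe_period, neg_zero]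

end SqrtDisplacement

/-- Let `f̂ : ℝ → ℝ` be the 2-periodic extension of the map given on
`[-1,1)` by `f̂(x) = 2√x - 1` for `x ∈ [0,1)` and `f̂(x) = 1 - 2√(-x)` for `x ∈ [-1,0)`, and
let `f` be the induced continuous map of the circle `ℝ/2ℤ`. Then `f` is topologically mixing
in the sense that every nonempty open subset `U` of `ℝ/2ℤ` has some iterate covering the whole
circle: there is `N ≥ 1` with `f^N(U) = ℝ/2ℤ`. -/
theorem fhat_circle_topologically_mixing
    (fhat : ℝ → ℝ)
    (h1 : ∀ x ∈ Set.Ico (0 : ℝ) 1, fhat x = 2 * Real.sqrt x - 1)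
    (h2 : ∀ x ∈ Set.Ico (-1 : ℝ) 0, fhat x = 1 - 2 * Real.sqrt (-x))
    (hper : ∀ x : ℝ, fhat (x + 2) = fhat x)
    (f : AddCircle (2 : ℝ) → AddCircle (2 : ℝ))
    (hf : ∀ x : ℝ, f (x : AddCircle (2 : ℝ)) = ((fhat x : ℝ) : AddCircle (2 : ℝ))) :
    ∀ U : Set (AddCircle (2 : ℝ)), IsOpen U → U.Nonempty →
      ∃ N : ℕ, 1 ≤ N ∧ f^[N] '' U = Set.univ := by
  have : Fact ((0 : ℝ) < 2) := ⟨two_pos⟩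
  have hlift : Semiconj ((↑) : ℝ → AddCircle (2 : ℝ)) (fun x => x + sqrtDisplacement x) f :=
    fun x => (coe_add_sqrtDisplacement_eq h1 h2 hper x).trans (hf x).symm
  exact fun U => exists_iterate_image_eq_univ_of_strictMono_displacement
    continuous_sqrtDisplacement strictMono_sqrtDisplacement hlift
end

section
/- Let (x_n)_{n≥1} be a sequence of real numbers with x₁ ∈ (0, 1/2) and x_{n+1} = (1 + x_n)²/4 for all n ≥ 1. Then 0 ≤ x_n ≤ 1 − 1/(2n) for every n ≥ 1. -/
/-!
The gap `u = 1 - x` to the fixed point `1` evolves by `u ↦ u * (1 - u / 4)`, and reciprocals turn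
this into an almost arithmetic progression: `1 / u` grows by exactly `1 / (4 - u)` at each step.
Gaps only shrink, so the increments never exceed the first one, `1 / (3 + x₁) ≤ 1`. Starting from
`1 / (1 - x₁) ≤ 2`, the reciprocal of the `n`-th gap is therefore at most `2 + (n - 1) ≤ 2 * n`.
-/

theorem inv_mul_one_sub_mul {K : Type*} [Field K] {c u : K} (hu : u ≠ 0) (hcu : 1 - c * u ≠ 0) :
    (u * (1 - c * u))⁻¹ = u⁻¹ + c / (1 - c * u) := by
  rw [inv_eq_one_div, inv_eq_one_div, div_add_div _ _ hu hcu]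
  ring

variable {K : Type*} [Field K] [LinearOrder K] [IsStrictOrderedRing K]

section MulOneSubMul

variable {c : K} {u : ℕ → K}

theorem mem_Ioc_of_succ_eq_mul_one_sub_mul (hc : 0 ≤ c) (hu₀ : 0 < u 0) (hcu₀ : c * u 0 < 1)
    (hrec : ∀ n, u (n + 1) = u n * (1 - c * u n)) (n : ℕ) : u n ∈ Set.Ioc 0 (u 0) := by
  induction n with
  | zero => exact ⟨hu₀, le_rfl⟩
  | succ n ih =>
    obtain ⟨hpos, hle⟩ := ih
    have hfactor_pos : 0 < 1 - c * u n :=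
      sub_pos.2 ((mul_le_mul_of_nonneg_left hle hc).trans_lt hcu₀)
    have hfactor_le : 1 - c * u n ≤ 1 := sub_le_self 1 (mul_nonneg hc hpos.le)
    rw [hrec n]
    exact ⟨mul_pos hpos hfactor_pos, (mul_le_of_le_one_right hpos.le hfactor_le).trans hle⟩

theorem inv_le_inv_zero_add_of_succ_eq_mul_one_sub_mul (hc : 0 ≤ c) (hu₀ : 0 < u 0)
    (hcu₀ : c * u 0 < 1) (hrec : ∀ n, u (n + 1) = u n * (1 - c * u n)) (n : ℕ) :
    (u n)⁻¹ ≤ (u 0)⁻¹ + n * (c / (1 - c * u 0)) := by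
  induction n with
  | zero => simp
  | succ n ih =>
    obtain ⟨hpos, hle⟩ := mem_Ioc_of_succ_eq_mul_one_sub_mul hc hu₀ hcu₀ hrec n
    have hfactor₀ : 0 < 1 - c * u 0 := sub_pos.2 hcu₀
    have hfactor : 1 - c * u 0 ≤ 1 - c * u n := by gcongr
    calc (u (n + 1))⁻¹ = (u n)⁻¹ + c / (1 - c * u n) := by
          rw [hrec n, inv_mul_one_sub_mul hpos.ne' (hfactor₀.trans_le hfactor).ne']
      _ ≤ ((u 0)⁻¹ + n * (c / (1 - c * u 0))) + c / (1 - c * u 0) := by gcongr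
      _ = (u 0)⁻¹ + (n + 1 : ℕ) * (c / (1 - c * u 0)) := by
          push_cast
          ring

end MulOneSubMul

section OneAddSqDivFour

variable {x : ℕ → K}

theorem nonneg_of_succ_eq_one_add_sq_div_four (hx₀ : 0 ≤ x 0)
    (hrec : ∀ n, x (n + 1) = (1 + x n) ^ 2 / 4) : ∀ n, 0 ≤ x n
  | 0 => hx₀
  | n + 1 => by
    rw [hrec n]
    positivity

theorem lt_one_and_inv_one_sub_le_of_succ_eq_one_add_sq_div_four (hx₀ : x 0 ∈ Set.Ioo (-3) 1)
    (hrec : ∀ n, x (n + 1) = (1 + x n) ^ 2 / 4) (n : ℕ) :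
    x n < 1 ∧ (1 - x n)⁻¹ ≤ (1 - x 0)⁻¹ + n / (3 + x 0) := by
  obtain ⟨hlower, hupper⟩ := hx₀
  have hgap_rec (k : ℕ) : 1 - x (k + 1) = (1 - x k) * (1 - 1 / 4 * (1 - x k)) := by
    rw [hrec k]
    ring
  have hgap₀ : 0 < 1 - x 0 := sub_pos.2 hupper
  have hsmall : 1 / 4 * (1 - x 0) < 1 := by linarith
  have hgap := mem_Ioc_of_succ_eq_mul_one_sub_mul (u := fun k ↦ 1 - x k)
    (by norm_num) hgap₀ hsmall hgap_rec n
  have hinv := inv_le_inv_zero_add_of_succ_eq_mul_one_sub_mul (u := fun k ↦ 1 - x k)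
    (by norm_num) hgap₀ hsmall hgap_rec n
  have hincrement : 1 / 4 / (1 - 1 / 4 * (1 - x 0)) = 1 / (3 + x 0) := by
    rw [show 1 - 1 / 4 * (1 - x 0) = (3 + x 0) / 4 by ring,
      div_div_div_cancel_right₀ four_ne_zero]
  rw [hincrement, mul_one_div] at hinv
  exact ⟨sub_pos.1 hgap.1, hinv⟩

end OneAddSqDivFour

theorem seq_le_one_sub_inv_two_mul_general
    (x : ℕ → K) (hx1 : x 1 ∈ Set.Icc (0 : K) (1 / 2))
    (hrec : ∀ n ≥ 1, x (n + 1) = (1 + x n) ^ 2 / 4) :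
    ∀ n ≥ 1, 0 ≤ x n ∧ x n ≤ 1 - 1 / (2 * n) := by
  intro n hn
  obtain ⟨m, rfl⟩ := Nat.exists_eq_add_of_le' hn
  obtain ⟨hnonneg, hhalf⟩ := hx1
  have hshift (k : ℕ) : x (k + 1 + 1) = (1 + x (k + 1)) ^ 2 / 4 := hrec (k + 1) k.succ_pos
  obtain ⟨hlt, hinv⟩ := lt_one_and_inv_one_sub_le_of_succ_eq_one_add_sq_div_four
    (x := fun k ↦ x (k + 1)) ⟨by linarith, by linarith⟩ hshift m
  have hinitial : (1 - x 1)⁻¹ ≤ 2 := inv_le_of_inv_le₀ two_pos (by linarith)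
  have hincrements : m / (3 + x 1) ≤ m := div_le_self m.cast_nonneg (by linarith)
  have hinv_le : (1 - x (m + 1))⁻¹ ≤ 2 * (m + 1 : ℕ) := by
    push_cast
    linarith [m.cast_nonneg (α := K)]
  have hgap : 1 / (2 * (m + 1 : ℕ)) ≤ 1 - x (m + 1) := by
    simpa only [one_div] using inv_le_of_inv_le₀ (sub_pos.2 hlt) hinv_le
  exact ⟨nonneg_of_succ_eq_one_add_sq_div_four (x := fun k ↦ x (k + 1)) hnonneg hshift m,
    le_sub_comm.1 hgap⟩

/-- If `x₁ ∈ (0, 1/2)` and `x_{n+1} = (1 + x_n)²/4` for all `n ≥ 1`, then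
`0 ≤ x_n ≤ 1 - 1/(2n)` for every `n ≥ 1`. -/
theorem seq_le_one_sub_inv_two_mul
    (x : ℕ → ℝ) (hx1 : x 1 ∈ Set.Ioo (0 : ℝ) (1 / 2))
    (hrec : ∀ n ≥ 1, x (n + 1) = (1 + x n) ^ 2 / 4) :
    ∀ n ≥ 1, 0 ≤ x n ∧ x n ≤ 1 - 1 / (2 * n) :=
  seq_le_one_sub_inv_two_mul_general x (Set.Ioo_subset_Icc_self hx1) hrec
end

section
/- Let (x_n)_{n≥1} be a sequence of real numbers with x₁ ∈ (0, 1/2) and x_{n+1} = (1 + x_n)²/4 for all n ≥ 1. Then x_{n+1} − x_n = (1 − x_n)²/4 ≥ 1/(16n²) for every n ≥ 1. -/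
/-!
In the variable `v = (1 - x) / 4` the recursion is the logistic map `v ↦ v * (1 - v)`. The condition
`|1 + x| ≤ 2 - 2 / c` says that `v` lies in `[1 / (2 * c), 1 - 1 / (2 * c)]`; there `v * (1 - v)` is
smallest at the endpoints, and for `c ≥ 1` this minimum is at least `1 / (2 * (c + 1))`. Each step
thus raises `c` by at most one, so `1 - x n = 4 * v` decays no faster than `2 / n`.
-/

section LinearOrderedField

variable {K : Type*} [Field K] [LinearOrder K] [IsStrictOrderedRing K]

lemma sq_one_sub_one_div_le {c : K} (hc : 1 ≤ c) : (1 - 1 / c) ^ 2 ≤ 1 - 2 / (c + 1) := by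
  have : 0 < c := by linarith
  have gap : 1 - 2 / (c + 1) - (1 - 1 / c) ^ 2 = (c - 1) / (c ^ 2 * (c + 1)) := by
    field_simp
    ring
  have gap_nonneg : 0 ≤ (c - 1) / (c ^ 2 * (c + 1)) :=
    div_nonneg (sub_nonneg.2 hc) (by positivity)
  linarith

lemma abs_one_add_sq_div_four_le {c y : K} (hc : 1 ≤ c) (hy : |1 + y| ≤ 2 - 2 / c) :
    |1 + (1 + y) ^ 2 / 4| ≤ 2 - 2 / (c + 1) := by
  have sq_le : (1 + y) ^ 2 / 4 ≤ 1 - 2 / (c + 1) := calc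
    (1 + y) ^ 2 / 4 = |1 + y| ^ 2 / 4 := by rw [sq_abs]
    _ ≤ (2 - 2 / c) ^ 2 / 4 := by gcongr
    _ = (1 - 1 / c) ^ 2 := by ring
    _ ≤ 1 - 2 / (c + 1) := sq_one_sub_one_div_le hc
  rw [abs_of_nonneg (by positivity)]
  linarith

lemma abs_one_add_le_of_rec {x : ℕ → K} {c : K} (hc : 0 ≤ c) (hx1 : |1 + x 1| ≤ 2 - 2 / (c + 1))
    (hrec : ∀ n ≥ 1, x (n + 1) = (1 + x n) ^ 2 / 4) {n : ℕ} (hn : 1 ≤ n) :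
    |1 + x n| ≤ 2 - 2 / (c + n) := by
  induction n, hn using Nat.le_induction with
  | base => simpa only [Nat.cast_one] using hx1
  | succ n hn ih =>
    have one_le : 1 ≤ c + n := le_add_of_nonneg_of_le hc (Nat.one_le_cast.2 hn)
    rw [hrec n hn, Nat.cast_succ, ← add_assoc]
    exact abs_one_add_sq_div_four_le one_le ih

lemma one_div_sq_le_of_abs_one_add_le {c y : K} (hc : 0 ≤ c) (hy : |1 + y| ≤ 2 - 2 / c) :
    1 / c ^ 2 ≤ (1 - y) ^ 2 / 4 := by
  have two_div_le : 2 / c ≤ 1 - y := by linarith [le_abs_self (1 + y)]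
  calc
    1 / c ^ 2 = (2 / c) ^ 2 / 4 := by ring
    _ ≤ (1 - y) ^ 2 / 4 := by gcongr

theorem seq_diff_eq_and_ge_general {x : ℕ → K} {c : K} (hc : 0 ≤ c)
    (hx1 : |1 + x 1| ≤ 2 - 2 / (c + 1)) (hrec : ∀ n ≥ 1, x (n + 1) = (1 + x n) ^ 2 / 4) :
    ∀ n ≥ 1, x (n + 1) - x n = (1 - x n) ^ 2 / 4 ∧ 1 / (c + n) ^ 2 ≤ (1 - x n) ^ 2 / 4 := by
  intro n hn
  constructor
  · rw [hrec n hn]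
    ring
  · exact one_div_sq_le_of_abs_one_add_le (by positivity) (abs_one_add_le_of_rec hc hx1 hrec hn)

lemma one_div_sixteen_mul_sq_le {t : K} (ht : 1 ≤ t) : 1 / (16 * t ^ 2) ≤ 1 / (3 + t) ^ 2 := by
  apply one_div_le_one_div_of_le (by positivity)
  calc
    (3 + t) ^ 2 ≤ (4 * t) ^ 2 := by gcongr; linarith
    _ = 16 * t ^ 2 := by ring

end LinearOrderedField

/-- If `x₁ ∈ (0, 1/2)` and `x_{n+1} = (1 + x_n)²/4` for all `n ≥ 1`, then
`x_{n+1} - x_n = (1 - x_n)²/4 ≥ 1/(16n²)` for every `n ≥ 1`. -/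
theorem seq_diff_eq_and_ge
    (x : ℕ → ℝ) (hx1 : x 1 ∈ Set.Ioo (0 : ℝ) (1 / 2))
    (hrec : ∀ n ≥ 1, x (n + 1) = (1 + x n) ^ 2 / 4) :
    ∀ n ≥ 1, x (n + 1) - x n = (1 - x n) ^ 2 / 4 ∧
      1 / (16 * (n : ℝ) ^ 2) ≤ (1 - x n) ^ 2 / 4 := by
  have hx1_abs : |1 + x 1| ≤ 2 - 2 / (3 + 1) := abs_le.2 ⟨by linarith [hx1.1], by linarith [hx1.2]⟩
  exact fun n hn ↦ (seq_diff_eq_and_ge_general zero_le_three hx1_abs hrec n hn).imp_right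
    (one_div_sixteen_mul_sq_le (Nat.one_le_cast.2 hn)).trans
end

section
/- Let f̂ : [−1,1] → [−1,1] be defined by f̂(x) = 2√x − 1 for x ∈ [0,1] and f̂(x) = 1 − 2√(−x) for x ∈ [−1,0). Fix ε ∈ (0, 1/2) and define the first entry time τ_ε(x) = inf{ n ≥ 0 : |f̂ⁿ(x)| < ε } ∈ ℕ ∪ {∞}. Then the (lower Lebesgue) integral of τ_ε over [−1,1] with respect to Lebesgue measure is infinite; in particular τ_ε is not Lebesgue integrable. -/
open MeasureTheory ENNReal

/-- The first entry time `τ_ε(x) = inf {n ≥ 0 : |f̂ⁿ(x)| < ε}`, with value `∞` (in `ℝ≥0∞`)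
if the orbit of `x` never enters `(-ε, ε)`. -/
noncomputable def entryTime (ε : ℝ) (x : ℝ) : ℝ≥0∞ :=
  sInf ((fun n : ℕ => (n : ℝ≥0∞)) '' {n : ℕ | |fhat^[n] x| < ε})

/-!
The map `fhat` fixes `1` with left derivative `1`, so orbits leave a neighbourhood of `1` slowly.
This is measured by `u x = (1 - x)⁻¹`, which drops by at most `1` along each step of an orbit in
`[-1, 1)`. Since `u < (1 - ε)⁻¹` on `(-ε, ε)`, the entry time at `x` is at least
`(1 - x)⁻¹ - (1 - ε)⁻¹`, and `(1 - x)⁻¹` has infinite integral up to `1`.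
-/

open Set

theorem setLIntegral_ofReal_inv_sub_eq_top {a b : ℝ} (hab : a < b) :
    ∫⁻ x in Ico a b, ENNReal.ofReal (b - x)⁻¹ = ⊤ := by
  have not_integrable : ¬ IntegrableOn (fun x : ℝ => (b - x)⁻¹) (Ico a b) := by
    intro h
    have h_neg : IntervalIntegrable (fun x : ℝ => (x - b)⁻¹) volume a b := by
      rw [intervalIntegrable_iff_integrableOn_Ico_of_le hab.le]
      simpa only [← inv_neg, neg_sub] using h.fun_neg
    simp [intervalIntegrable_sub_inv_iff, hab.ne] at h_neg
  have h_nonneg : 0 ≤ᵐ[volume.restrict (Ico a b)] fun x : ℝ => (b - x)⁻¹ := by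
    filter_upwards [ae_restrict_mem measurableSet_Ico] with x hx
    exact inv_nonneg.mpr (sub_nonneg.mpr hx.2.le)
  have h_meas : Measurable fun x : ℝ => (b - x)⁻¹ := by fun_prop
  by_contra h
  exact not_integrable <|
    (lintegral_ofReal_ne_top_iff_integrable h_meas.aestronglyMeasurable h_nonneg).mp h

theorem fhat_of_nonneg {x : ℝ} (hx : 0 ≤ x) : fhat x = 2 * √x - 1 := if_pos hx

theorem fhat_of_neg {x : ℝ} (hx : x < 0) : fhat x = 1 - 2 * √(-x) := if_neg hx.not_ge

theorem mapsTo_fhat_Ico : MapsTo fhat (Ico (-1) 1) (Ico (-1) 1) := by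
  rintro x ⟨hx_ge, hx_lt⟩
  rcases le_or_gt 0 x with hx | hx
  · have h_nonneg : 0 ≤ √x := Real.sqrt_nonneg x
    have h_lt_one : √x < 1 := (Real.sqrt_lt' one_pos).mpr (by simpa using hx_lt)
    rw [fhat_of_nonneg hx]
    constructor <;> linarith
  · have h_pos : 0 < √(-x) := Real.sqrt_pos.mpr (neg_pos.mpr hx)
    have h_le_one : √(-x) ≤ 1 := Real.sqrt_le_one.mpr (by linarith)
    rw [fhat_of_neg hx]
    constructor <;> linarith

theorem inv_one_sub_le_inv_one_sub_fhat_add_one {x : ℝ} (hx : x ∈ Ico (-1) 1) :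
    (1 - x)⁻¹ ≤ (1 - fhat x)⁻¹ + 1 := by
  rcases le_or_gt 0 x with hx_nonneg | hx_neg
  · have h_nonneg : 0 ≤ √x := Real.sqrt_nonneg x
    have h_pos : 0 < 1 - √x := sub_pos.mpr ((Real.sqrt_lt' one_pos).mpr (by simpa using hx.2))
    have h_factor : 1 - x = (1 - √x) * (1 + √x) := by
      linear_combination Real.sq_sqrt hx_nonneg
    have h_fhat : 1 - fhat x = 2 * (1 - √x) := by rw [fhat_of_nonneg hx_nonneg]; ring
    calc (1 - x)⁻¹ = (1 - fhat x)⁻¹ + (2 * (1 + √x))⁻¹ := by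
          rw [h_factor, h_fhat]; field_simp; ring
      _ ≤ (1 - fhat x)⁻¹ + 1 := by gcongr; exact inv_le_one_of_one_le₀ (by linarith)
  · have h_fhat : 0 ≤ (1 - fhat x)⁻¹ :=
      inv_nonneg.mpr (sub_nonneg.mpr (mapsTo_fhat_Ico hx).2.le)
    have h_le_one : (1 - x)⁻¹ ≤ 1 := inv_le_one_of_one_le₀ (by linarith)
    linarith

theorem inv_one_sub_le_inv_one_sub_iterate_fhat_add {x : ℝ} (hx : x ∈ Ico (-1) 1) (n : ℕ) :
    (1 - x)⁻¹ ≤ (1 - fhat^[n] x)⁻¹ + n := by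
  induction n with
  | zero => simp
  | succ n ih =>
    have h_step := inv_one_sub_le_inv_one_sub_fhat_add_one (mapsTo_fhat_Ico.iterate n hx)
    rw [Function.iterate_succ_apply']
    push_cast
    linarith

theorem le_entryTime_iff {ε x : ℝ} {t : ℝ≥0∞} :
    t ≤ entryTime ε x ↔ ∀ n : ℕ, |fhat^[n] x| < ε → t ≤ n := by
  simp [entryTime]

theorem ofReal_inv_one_sub_le_add_entryTime {ε x : ℝ} (hε : ε < 1) (hx : x ∈ Ico (-1) 1) :
    ENNReal.ofReal (1 - x)⁻¹ ≤ ENNReal.ofReal (1 - ε)⁻¹ + entryTime ε x := by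
  rw [← tsub_le_iff_left, le_entryTime_iff]
  intro n hn
  have h_entry : (1 - fhat^[n] x)⁻¹ ≤ (1 - ε)⁻¹ :=
    inv_anti₀ (sub_pos.mpr hε) (sub_le_sub_left (lt_of_abs_lt hn).le 1)
  have h_real : (1 - x)⁻¹ ≤ (1 - ε)⁻¹ + n :=
    (inv_one_sub_le_inv_one_sub_iterate_fhat_add hx n).trans (by gcongr)
  rw [tsub_le_iff_left, ← ENNReal.ofReal_natCast n]
  exact (ENNReal.ofReal_le_ofReal h_real).trans ENNReal.ofReal_add_le

theorem entryTime_lintegral_eq_top_general (ε : ℝ) (hε : ε < 1) :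
    ∫⁻ x in Icc (-1 : ℝ) 1, entryTime ε x = ⊤ := by
  have h_top : ∫⁻ x in Ico (-1 : ℝ) 1, (ENNReal.ofReal (1 - ε)⁻¹ + entryTime ε x) = ⊤ := by
    rw [← top_le_iff, ← setLIntegral_ofReal_inv_sub_eq_top (by norm_num : (-1 : ℝ) < 1)]
    exact setLIntegral_mono' measurableSet_Ico fun _ => ofReal_inv_one_sub_le_add_entryTime hε
  have h_const : ∫⁻ _ in Ico (-1 : ℝ) 1, ENNReal.ofReal (1 - ε)⁻¹ ≠ ⊤ := by
    simp [ENNReal.mul_eq_top]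
  rw [lintegral_add_left measurable_const, ENNReal.add_eq_top] at h_top
  rw [← restrict_Ico_eq_restrict_Icc]
  exact h_top.resolve_left h_const

/-- For any `ε ∈ (0, 1/2)`, the (lower Lebesgue) integral over `[-1,1]` of
the first entry time `τ_ε` into `(-ε, ε)` is infinite; in particular `τ_ε` is not Lebesgue
integrable. -/
theorem entryTime_lintegral_eq_top (ε : ℝ) (hε0 : 0 < ε) (hε : ε < 1 / 2) :
    ∫⁻ x in Set.Icc (-1 : ℝ) 1, entryTime ε x = ⊤ :=
  entryTime_lintegral_eq_top_general ε (hε.trans one_half_lt_one)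
end
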